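/- arXiv:2004.12653 — 3 statements merged into one kernel-verified Lean document; each statement's English description precedes it below -/
import Mathlib

section
/- The abelianization K/[K,K] of the kneading group K is a free abelian group of rank k+p; more precisely, there is a group isomorphism from K/[K,K] onto ℤ^{k+p} sending the class of each generator a₁,…,a_k, b₁,…,b_p to the corresponding standard basis vector. -/
/-- States of the kneading automaton: `a i` is the paper's `a_{i+1}` (for `i < k`),
`b i` is the paper's `b_{i+1}` (for `i < p`), and `id` is the identity state. -/
inductive KState : Type
  | a (i : ℕ)
  | b (i : ℕ)
  | id
  deriving DecidableEq

/-- Transition function of the kneading automaton `𝒦(x₁…x_k, y₁…y_p)`, where the paper's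
`x_i` is `x (i-1)` and `y_i` is `y (i-1)`.  `KTrans k p x y s z = (output letter, restriction)`. -/
def KTrans (k p : ℕ) (x y : ℕ → ℤ) : KState → ℤ → ℤ × KState
  | .a 0, z => (z + 1, .id)
  | .a (i+1), z => if z = x i then (z, .a i) else (z, .id)
  | .b 0, z =>
      if z = x (k-1) then (z, .a (k-1))
      else if z = y (p-1) then (z, .b (p-1))
      else (z, .id)
  | .b (i+1), z => if z = y i then (z, .b i) else (z, .id)
  | .id, z => (z, .id)

/-- The action of a state on the tree `ℤ*` of finite words over `ℤ`,
defined recursively by `q(zv) = q(z)·(q|_z)(v)`. -/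
def stateAct (k p : ℕ) (x y : ℕ → ℤ) : KState → List ℤ → List ℤ
  | _, [] => []
  | s, z :: v => (KTrans k p x y s z).1 :: stateAct k p x y (KTrans k p x y s z).2 v

/-- The generating states `S = {a₁,…,a_k, b₁,…,b_p}`. -/
def IsGen (k p : ℕ) (s : KState) : Prop :=
  (∃ i, i < k ∧ s = .a i) ∨ (∃ j, j < p ∧ s = .b j)

/-- The generators of the kneading group, as permutations of `List ℤ` whose underlying
function is the action of a generating state. -/
def SGens (k p : ℕ) (x y : ℕ → ℤ) : Set (Equiv.Perm (List ℤ)) :=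
  {g | ∃ s : KState, IsGen k p s ∧ ⇑g = stateAct k p x y s}

/-- The kneading group `K = 𝕂(x₁…x_k, y₁…y_p)`. -/
def Kgroup (k p : ℕ) (x y : ℕ → ℤ) : Subgroup (Equiv.Perm (List ℤ)) :=
  Subgroup.closure (SGens k p x y)

/-!
Every element `g` of the kneading group acts on the children of each vertex `w` of the tree by a
translation `z ↦ z + ℓ_g(w)`, and these labels satisfy the cocycle identity
`ℓ_{gh}(w) = ℓ_h(w) + ℓ_g(h w)`. Since `h` permutes the words of length `n`, the sum of the labels
over the `n`-th level is additive in `g` as soon as it is finite.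

List the generators in the order `s₀, …, s_{k+p-1} = a₁, …, a_k, b₁, …, b_p`. The label of a
generator at `w` is `1` if reading `w` leads to the state `a₁` and `0` otherwise. Each `s_{m+1}` has
an edge to `s_m`, and the only other edge between generators leads from `b₁` to `b_p`, which is
`k + p - 1` further steps away from `a₁`. Hence on the levels `0, …, k+p-1` the labels of `s_m`
vanish except for a single `1` on level `m`, and the level sums of the generators are the standard
basis vectors of `ℤ^{k+p}`.
-/

open Equiv (Perm)

section Portrait

variable {A : Type*}

section AddGroup

variable [AddGroup A]

/-- `ℓ` is the portrait of the permutation `g` of the tree of words over `A`: `g` fixes the root and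
maps the child `a` of each vertex `w` to the child `a + ℓ w` of `g w`. In particular `g` is a tree
automorphism. -/
structure IsPortrait (g : Perm (List A)) (ℓ : List A → A) : Prop where
  map_nil : g [] = []
  map_concat : ∀ w a, g (w ++ [a]) = g w ++ [a + ℓ w]

/-- The portrait of `g` (see `IsPortrait`), a junk value if `g` has none. It is read off from the
images of the words ending in `0`. -/
def portrait (g : Perm (List A)) (w : List A) : A :=
  (g (w ++ [0])).getLastD 0

namespace IsPortrait

variable {g h : Perm (List A)} {ℓ ℓ' : List A → A}

theorem portrait_eq (hg : IsPortrait g ℓ) : portrait g = ℓ := by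
  funext w
  rw [portrait, hg.map_concat, List.getLastD_concat, zero_add]

theorem length_apply (hg : IsPortrait g ℓ) (w : List A) : (g w).length = w.length := by
  induction w using List.reverseRecOn with
  | nil => rw [hg.map_nil]
  | append_singleton w a ih => simp [hg.map_concat, ih]

theorem one : IsPortrait (1 : Perm (List A)) 0 where
  map_nil := rfl
  map_concat w a := by simp

theorem mul (hg : IsPortrait g ℓ) (hh : IsPortrait h ℓ') :
    IsPortrait (g * h) (ℓ' + ℓ ∘ h) where
  map_nil := by rw [Perm.mul_apply, hh.map_nil, hg.map_nil]
  map_concat w a := by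
    simp only [Perm.mul_apply, hh.map_concat, hg.map_concat, Pi.add_apply, Function.comp_apply,
      add_assoc]

theorem inv (hg : IsPortrait g ℓ) : IsPortrait g⁻¹ (-(ℓ ∘ ⇑g⁻¹)) where
  map_nil := by rw [Perm.inv_eq_iff_eq, hg.map_nil]
  map_concat w a := by
    rw [Perm.inv_eq_iff_eq, hg.map_concat]
    simp

theorem bijOn_level (hg : IsPortrait g ℓ) (n : ℕ) :
    Set.BijOn g {w | w.length = n} {w | w.length = n} :=
  g.bijOn fun w ↦ by simp only [Set.mem_ofPred_eq, hg.length_apply]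

end IsPortrait

/-- The support of a portrait within the first `N` levels `0, …, N - 1` of the tree. -/
def supportBelow (N : ℕ) (ℓ : List A → A) : Set (List A) :=
  {w | w.length < N} ∩ Function.support ℓ

theorem IsPortrait.finite_supportBelow_comp {g : Perm (List A)} {ℓ ℓ' : List A → A} {N : ℕ}
    (hg : IsPortrait g ℓ) (hℓ' : (supportBelow N ℓ').Finite) :
    (supportBelow N (ℓ' ∘ g)).Finite :=
  (hℓ'.preimage g.injective.injOn).subset fun w ⟨hw, hℓ'w⟩ ↦
    ⟨(hg.length_apply w).trans_lt hw, hℓ'w⟩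

variable (A) in
/-- The tree automorphisms that act by translations at all vertices, and nontrivially at only
finitely many vertices of the first `N` levels. -/
def finitaryBelow (N : ℕ) : Subgroup (Perm (List A)) where
  carrier := {g | ∃ ℓ, IsPortrait g ℓ ∧ (supportBelow N ℓ).Finite}
  one_mem' := ⟨0, .one, by simp [supportBelow]⟩
  mul_mem' := by
    rintro g h ⟨ℓ, hg, finite_ℓ⟩ ⟨ℓ', hh, finite_ℓ'⟩
    refine ⟨_, hg.mul hh, (finite_ℓ'.union (hh.finite_supportBelow_comp finite_ℓ)).subset ?_⟩
    rw [supportBelow, supportBelow, supportBelow, ← Set.inter_union_distrib_left]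
    exact Set.inter_subset_inter_right _ (Function.support_add _ _)
  inv_mem' := by
    rintro g ⟨ℓ, hg, finite_ℓ⟩
    refine ⟨_, hg.inv, ?_⟩
    rw [supportBelow, Function.support_neg]
    exact hg.inv.finite_supportBelow_comp finite_ℓ

end AddGroup

variable [AddCommGroup A] {N n : ℕ} {g h : Perm (List A)} {ℓ : List A → A}

/-- The sum of the portrait of `g` over the words of length `n`, with junk value `0` if infinitely
many terms are nonzero. -/
noncomputable def levelSum (n : ℕ) (g : Perm (List A)) : A :=
  ∑ᶠ w ∈ {w : List A | w.length = n}, portrait g w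

theorem levelSum_mul (hn : n < N) (hg : g ∈ finitaryBelow A N) (hh : h ∈ finitaryBelow A N) :
    levelSum n (g * h) = levelSum n g + levelSum n h := by
  obtain ⟨ℓ, hg, finite_ℓ⟩ := hg
  obtain ⟨ℓ', hh, finite_ℓ'⟩ := hh
  have finite_level {f : List A → A} (hf : (supportBelow N f).Finite) :
      ({w | w.length = n} ∩ Function.support f).Finite :=
    hf.subset fun w hw ↦ ⟨hw.1.trans_lt hn, hw.2⟩
  have sum_comp : ∑ᶠ w ∈ {w | w.length = n}, (ℓ ∘ h) w = ∑ᶠ w ∈ {w | w.length = n}, ℓ w :=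
    finsum_mem_eq_of_bijOn h (hh.bijOn_level n) fun _ _ ↦ rfl
  simp only [levelSum, (hg.mul hh).portrait_eq, hg.portrait_eq, hh.portrait_eq, Pi.add_apply]
  rw [finsum_mem_add_distrib' (finite_level finite_ℓ')
    (finite_level (hh.finite_supportBelow_comp finite_ℓ)), sum_comp, add_comm]

variable (A N) in
/-- The level sums of the first `N` levels, as a homomorphism. -/
noncomputable def levelSums : finitaryBelow A N →* Multiplicative (Fin N → A) :=
  MonoidHom.mk' (fun g ↦ .ofAdd fun n ↦ levelSum n (g : Perm (List A))) fun g h ↦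
    congrArg Multiplicative.ofAdd <| funext fun n ↦ levelSum_mul n.isLt g.2 h.2

theorem IsPortrait.levelSum_eq_ite [DecidableEq A] (hg : IsPortrait g ℓ) (v : List A)
    (a : A) (hℓ : ∀ w, w.length = n → ℓ w = if w = v then a else 0) :
    levelSum n g = if v.length = n then a else 0 := by
  rw [levelSum, hg.portrait_eq, finsum_mem_def, finsum_eq_single _ v]
  · grind [Set.indicator_apply]
  · grind [Set.indicator_apply]

end Portrait

theorem exists_abelianization_mulEquiv_of_map_generators {G ι : Type*} [Group G] [Finite ι]
    [DecidableEq ι] {s : ι → G} (hs : Subgroup.closure (Set.range s) = ⊤)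
    {φ : G →* Multiplicative (ι → ℤ)} (hφ : ∀ i, φ (s i) = .ofAdd (Pi.single i 1)) :
    ∃ e : Abelianization G ≃* Multiplicative (ι → ℤ), ∀ g, e (.of g) = φ g := by
  let ψ : Multiplicative (ι → ℤ) →* Abelianization G :=
    AddMonoidHom.toMultiplicativeLeft
      ((Pi.basisFun ℤ ι).constr ℤ fun i ↦ Additive.ofMul (Abelianization.of (s i))).toAddMonoidHom
  have hψ (i : ι) : ψ (.ofAdd (Pi.single i 1)) = .of (s i) := by
    rw [← Pi.basisFun_apply]
    exact congrArg Additive.toMul ((Pi.basisFun ℤ ι).constr_basis ℤ _ i)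
  have left_inv : ψ.comp (Abelianization.lift φ) = .id _ := by
    refine Abelianization.hom_ext _ _ (MonoidHom.eq_of_eqOn_dense hs ?_)
    rintro _ ⟨i, rfl⟩
    simp [hφ, hψ]
  have right_inv : (Abelianization.lift φ).comp ψ = .id _ := by
    refine MonoidHom.toAdditive.injective (AddMonoidHom.functions_ext' _ _ _ fun i ↦ ?_)
    refine AddMonoidHom.ext_int ?_
    change Abelianization.lift φ (ψ (.ofAdd (Pi.single i 1))) = .ofAdd (Pi.single i 1)
    rw [hψ, Abelianization.lift_apply_of, hφ]
  exact ⟨(Abelianization.lift φ).toMulEquiv ψ left_inv right_inv, Abelianization.lift_apply_of φ⟩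

section Kneading

/-- The amount by which a state of the kneading automaton translates the first letter. -/
def KState.shift : KState → ℤ
  | .a 0 => 1
  | _ => 0

/-- The generating states in the order `a₁, …, a_k, b₁, b₂, …`, indexed from `0`. -/
def KState.nth (k m : ℕ) : KState :=
  if m < k then .a m else .b (m - k)

theorem KState.nth_of_lt {k m : ℕ} (h : m < k) : nth k m = .a m :=
  if_pos h

theorem KState.nth_add (k j : ℕ) : nth k (k + j) = .b j := by
  simp [nth]

theorem isGen_iff_exists_nth {k p : ℕ} {s : KState} :
    IsGen k p s ↔ ∃ m : Fin (k + p), s = .nth k m := by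
  constructor
  · rintro (⟨i, hi, rfl⟩ | ⟨j, hj, rfl⟩)
    · exact ⟨⟨i, by omega⟩, (KState.nth_of_lt hi).symm⟩
    · exact ⟨⟨k + j, by omega⟩, (KState.nth_add k j).symm⟩
  · rintro ⟨⟨m, hm⟩, rfl⟩
    rcases lt_or_ge m k with hmk | hkm
    · exact .inl ⟨m, hmk, KState.nth_of_lt hmk⟩
    · obtain ⟨j, rfl⟩ := Nat.exists_eq_add_of_le hkm
      exact .inr ⟨j, by omega, KState.nth_add k j⟩

variable (k p : ℕ) (x y : ℕ → ℤ)

theorem fst_KTrans (s : KState) (z : ℤ) : (KTrans k p x y s z).1 = z + s.shift := by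
  rcases s with (_ | i) | (_ | i) | _ <;> simp only [KTrans, KState.shift] <;> grind

/-- The inverse of `stateAct`. -/
def stateActInv : KState → List ℤ → List ℤ
  | _, [] => []
  | s, z :: v => (z - s.shift) :: stateActInv (KTrans k p x y s (z - s.shift)).2 v

theorem stateActInv_stateAct (s : KState) (w : List ℤ) :
    stateActInv k p x y s (stateAct k p x y s w) = w := by
  induction w generalizing s with
  | nil => rfl
  | cons z v ih => simp [stateAct, stateActInv, fst_KTrans, ih]

theorem stateAct_stateActInv (s : KState) (w : List ℤ) :
    stateAct k p x y s (stateActInv k p x y s w) = w := by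
  induction w generalizing s with
  | nil => rfl
  | cons z v ih => simp [stateAct, stateActInv, fst_KTrans, ih]

/-- The tree automorphism induced by a state, as a permutation of the words over `ℤ`. -/
@[simps apply]
def statePerm (s : KState) : Perm (List ℤ) where
  toFun := stateAct k p x y s
  invFun := stateActInv k p x y s
  left_inv := stateActInv_stateAct k p x y s
  right_inv := stateAct_stateActInv k p x y s

/-- The portrait of the tree automorphism induced by a state: its value at `w` is the shift of the
state reached by reading `w`. -/
def stateLabel : KState → List ℤ → ℤ
  | s, [] => s.shift
  | s, z :: v => stateLabel (KTrans k p x y s z).2 v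

theorem isPortrait_statePerm (s : KState) :
    IsPortrait (statePerm k p x y s) (stateLabel k p x y s) where
  map_nil := rfl
  map_concat w a := by
    induction w generalizing s with
    | nil => simp [stateAct, stateLabel, fst_KTrans]
    | cons z v ih => simpa [stateAct, stateLabel] using ih _

theorem stateLabel_id (w : List ℤ) : stateLabel k p x y .id w = 0 := by
  induction w with
  | nil => rfl
  | cons _ _ ih => exact ih

/-- The letter labelling the edge from the generating state `nth k (m + 1)` to `nth k m`. -/
def kneadingLetter (m : ℕ) : ℤ :=
  if m < k then x m else y (m - k)

/-- The word leading from the generating state `nth k m` to `nth k 0`, that is, to `a₁`. -/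
def kneadingWord : ℕ → List ℤ
  | 0 => []
  | m + 1 => kneadingLetter k x y m :: kneadingWord m

theorem length_kneadingWord (m : ℕ) : (kneadingWord k x y m).length = m := by
  induction m with
  | zero => rfl
  | succ m ih => rw [kneadingWord, List.length_cons, ih]

variable {k p}

theorem KState.shift_nth (hk : 1 ≤ k) (m : ℕ) : (nth k m).shift = if m = 0 then 1 else 0 := by
  unfold nth
  grind [shift]

theorem snd_KTrans_nth_zero (hk : 1 ≤ k) (z : ℤ) : (KTrans k p x y (.nth k 0) z).2 = .id := by
  rw [KState.nth_of_lt hk, KTrans]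

theorem snd_KTrans_nth_succ_kneadingLetter (m : ℕ) :
    (KTrans k p x y (.nth k (m + 1)) (kneadingLetter k x y m)).2 = .nth k m := by
  rcases lt_trichotomy (m + 1) k with a_to_a | rfl | b_to_b
  · simp [KState.nth, kneadingLetter, KTrans, a_to_a, Nat.lt_of_succ_lt a_to_a]
  · simp [KState.nth, kneadingLetter, KTrans]
  · obtain ⟨j, rfl⟩ := Nat.exists_eq_add_of_le (Nat.le_of_lt_succ b_to_b)
    simp [KState.nth_add, add_assoc, kneadingLetter, KTrans]

theorem snd_KTrans_nth_succ_of_ne (hp : 1 ≤ p) {m : ℕ} {z : ℤ} (hz : z ≠ kneadingLetter k x y m) :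
    (KTrans k p x y (.nth k (m + 1)) z).2 = .id ∨
      (KTrans k p x y (.nth k (m + 1)) z).2 = .nth k (k + p - 1) := by
  rcases lt_trichotomy (m + 1) k with a_to_a | rfl | b_to_b
  · simp_all [KState.nth, kneadingLetter, KTrans, Nat.lt_of_succ_lt a_to_a]
  · rw [Nat.add_sub_assoc hp, KState.nth_add, KState.nth, if_neg (lt_irrefl _), Nat.sub_self]
    grind [KTrans, kneadingLetter]
  · obtain ⟨j, rfl⟩ := Nat.exists_eq_add_of_le (Nat.le_of_lt_succ b_to_b)
    simp_all [KState.nth_add, add_assoc, kneadingLetter, KTrans]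

theorem stateLabel_nth (hk : 1 ≤ k) (hp : 1 ≤ p) (m : ℕ) {w : List ℤ} (hw : w.length < k + p) :
    stateLabel k p x y (.nth k m) w = if w = kneadingWord k x y m then 1 else 0 := by
  induction w generalizing m with
  | nil => cases m <;> simp [stateLabel, KState.shift_nth hk, kneadingWord]
  | cons z v ih =>
    rw [List.length_cons] at hw
    cases m with
    | zero => simp [stateLabel, snd_KTrans_nth_zero x y hk, stateLabel_id, kneadingWord]
    | succ m =>
      rw [stateLabel, kneadingWord]
      rcases eq_or_ne z (kneadingLetter k x y m) with rfl | hz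
      · rw [snd_KTrans_nth_succ_kneadingLetter, ih m (by omega)]
        simp
      · rw [if_neg (by simp [hz])]
        rcases snd_KTrans_nth_succ_of_ne x y hp hz with to_id | to_last
        · rw [to_id, stateLabel_id]
        · have v_ne : v ≠ kneadingWord k x y (k + p - 1) := fun h ↦ by
            have := congrArg List.length h
            rw [length_kneadingWord] at this
            omega
          rw [to_last, ih _ (by omega), if_neg v_ne]

theorem statePerm_nth_mem_finitaryBelow (hk : 1 ≤ k) (hp : 1 ≤ p) (m : ℕ) :
    statePerm k p x y (.nth k m) ∈ finitaryBelow ℤ (k + p) := by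
  refine ⟨_, isPortrait_statePerm k p x y _,
    (Set.finite_singleton (kneadingWord k x y m)).subset fun w ⟨hw, label_ne_zero⟩ ↦ ?_⟩
  rw [Function.mem_support, stateLabel_nth x y hk hp m hw] at label_ne_zero
  exact of_not_not fun w_ne ↦ label_ne_zero (if_neg w_ne)

theorem levelSum_statePerm_nth (hk : 1 ≤ k) (hp : 1 ≤ p) (m : ℕ) {n : ℕ} (hn : n < k + p) :
    levelSum n (statePerm k p x y (.nth k m)) = if m = n then 1 else 0 := by
  rw [(isPortrait_statePerm k p x y _).levelSum_eq_ite (kneadingWord k x y m) 1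
    fun w hw ↦ stateLabel_nth x y hk hp m (hw.trans_lt hn), length_kneadingWord]

variable {x y}

theorem eq_statePerm_iff {g : Perm (List ℤ)} {s : KState} :
    g = statePerm k p x y s ↔ ⇑g = stateAct k p x y s :=
  DFunLike.coe_injective.eq_iff.symm

variable (k p x y) in
theorem SGens_eq_range :
    SGens k p x y = Set.range fun m : Fin (k + p) ↦ statePerm k p x y (.nth k m) := by
  ext g
  simp only [SGens, isGen_iff_exists_nth, ← eq_statePerm_iff, Set.mem_ofPred_eq, Set.mem_range]
  grind

theorem Kgroup_le_finitaryBelow (hk : 1 ≤ k) (hp : 1 ≤ p) :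
    Kgroup k p x y ≤ finitaryBelow ℤ (k + p) := by
  rw [Kgroup, SGens_eq_range, Subgroup.closure_le]
  rintro _ ⟨m, rfl⟩
  exact statePerm_nth_mem_finitaryBelow x y hk hp m

variable (k p x y) in
/-- The generators `a₁, …, a_k, b₁, …, b_p` as elements of the kneading group. -/
def kneadingGenerator (m : Fin (k + p)) : Kgroup k p x y :=
  ⟨statePerm k p x y (.nth k m), Subgroup.subset_closure <| by
    rw [SGens_eq_range]; exact Set.mem_range_self m⟩

theorem closure_range_kneadingGenerator :
    Subgroup.closure (Set.range (kneadingGenerator k p x y)) = ⊤ := by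
  have range_eq : Set.range (kneadingGenerator k p x y) = Subtype.val ⁻¹' SGens k p x y := by
    ext g
    simp only [SGens_eq_range, kneadingGenerator, Set.mem_range, Set.mem_preimage, Subtype.ext_iff]
  rw [range_eq]
  exact Subgroup.closure_closure_coe_preimage

/-- The level sums of the first `k + p` levels, as a homomorphism on the kneading group. -/
noncomputable def kneadingCharacter (hk : 1 ≤ k) (hp : 1 ≤ p) :
    Kgroup k p x y →* Multiplicative (Fin (k + p) → ℤ) :=
  (levelSums ℤ (k + p)).comp (Subgroup.inclusion (Kgroup_le_finitaryBelow hk hp))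

theorem kneadingCharacter_kneadingGenerator (hk : 1 ≤ k) (hp : 1 ≤ p) (m : Fin (k + p)) :
    kneadingCharacter hk hp (kneadingGenerator k p x y m) = .ofAdd (Pi.single m 1) := by
  refine congrArg Multiplicative.ofAdd (funext fun n ↦ ?_)
  refine (levelSum_statePerm_nth x y hk hp m n.isLt).trans ?_
  simp [Pi.single_apply, Fin.ext_iff, eq_comm]

theorem eq_kneadingGenerator {g : Kgroup k p x y} {m : Fin (k + p)}
    (hg : ⇑(g : Perm (List ℤ)) = stateAct k p x y (.nth k m)) : g = kneadingGenerator k p x y m :=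
  Subtype.ext (eq_statePerm_iff.2 hg)

end Kneading

theorem stmt4 (k p : ℕ) (hk : 1 ≤ k) (hp : 1 ≤ p) (x y : ℕ → ℤ)
    (hxy : x (k - 1) ≠ y (p - 1)) :
    ∃ e : Abelianization ↥(Kgroup k p x y) ≃* Multiplicative (Fin (k + p) → ℤ),
      (∀ (g : ↥(Kgroup k p x y)) (i : ℕ) (hi : i < k),
          ⇑(g : Equiv.Perm (List ℤ)) = stateAct k p x y (.a i) →
          e (Abelianization.of g) =
            Multiplicative.ofAdd (Pi.single (⟨i, by omega⟩ : Fin (k + p)) (1 : ℤ))) ∧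
      (∀ (g : ↥(Kgroup k p x y)) (j : ℕ) (hj : j < p),
          ⇑(g : Equiv.Perm (List ℤ)) = stateAct k p x y (.b j) →
          e (Abelianization.of g) =
            Multiplicative.ofAdd (Pi.single (⟨k + j, by omega⟩ : Fin (k + p)) (1 : ℤ))) := by
  obtain ⟨e, he⟩ := exists_abelianization_mulEquiv_of_map_generators
    closure_range_kneadingGenerator
    (kneadingCharacter_kneadingGenerator (x := x) (y := y) hk hp)
  have e_of_eq (g : Kgroup k p x y) (m : Fin (k + p))
      (hg : ⇑(g : Perm (List ℤ)) = stateAct k p x y (.nth k m)) :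
      e (.of g) = .ofAdd (Pi.single m 1) := by
    rw [he, eq_kneadingGenerator hg, kneadingCharacter_kneadingGenerator]
  refine ⟨e, fun g i hi hg ↦ e_of_eq g _ ?_, fun g j hj hg ↦ e_of_eq g _ ?_⟩
  · rw [hg, KState.nth_of_lt hi]
  · rw [hg, KState.nth_add]
end

section
/- The kneading group K has exponential growth: letting B_n denote the set of elements of K expressible as a product of at most n elements of S ∪ S⁻¹, there exists a real number C > 1 such that B_n is finite with |B_n| ≥ Cⁿ for all n ≥ 1. -/
/-- The ball of radius `n`: elements expressible as a product of at most `n`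
elements of `S ∪ S⁻¹`. -/
def wordBall {G : Type*} [Group G] (S : Set G) (n : ℕ) : Set G :=
  {g | ∃ l : List G, l.length ≤ n ∧ (∀ a ∈ l, a ∈ S ∨ a⁻¹ ∈ S) ∧ l.prod = g}

/-!
On words `[z, w]`, the state `a₁` is the shift `z ↦ z + 1`, and the generator that restricts to `a₁`
at `x₁` (it is `a₂`, or `b₁` when `k = 1`) changes `w` only when `z = x₁`: they act like the moving
cursor and a lamp of a lamplighter. The orders `move` and `move, then touch the lamp` generate a
free monoid, because a product of such orders, started so that the cursor arrives at the lamp with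
its last order, reveals what that order was. Hence the ball of radius `2n` has at least `2ⁿ`
elements; since it is the square of the ball of radius `n`, the latter has at least `√2ⁿ`.
-/

open scoped Pointwise

section WordBall

variable {G : Type*} [Group G] {S : Set G}

theorem wordBall_eq_pow (S : Set G) (n : ℕ) : wordBall S n = (insert 1 (S ∪ S⁻¹)) ^ n := by
  refine Set.Subset.antisymm ?_ ?_
  · rintro g ⟨l, hl, hlS, rfl⟩
    have hprod : l.prod ∈ (insert 1 (S ∪ S⁻¹)) ^ l.length :=
      Set.mem_pow.2 ⟨fun i => ⟨l.get i, Or.inr (hlS _ (l.get_mem i))⟩, by rw [List.ofFn_get]⟩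
    exact Set.pow_subset_pow_right (Set.mem_insert 1 _) hl hprod
  · induction n with
    | zero =>
      rintro g rfl
      exact ⟨[], le_rfl, by simp, rfl⟩
    | succ n ih =>
      rw [pow_succ']
      rintro _ ⟨a, ha, g, hg, rfl⟩
      obtain ⟨l, hl, hlS, rfl⟩ := ih hg
      rcases ha with rfl | ha
      · exact ⟨l, by lia, hlS, by simp⟩
      · exact ⟨a :: l, by simpa using hl, List.forall_mem_cons.2 ⟨ha, hlS⟩, List.prod_cons⟩

theorem wordBall_mul (S : Set G) (m n : ℕ) : wordBall S (m * n) = wordBall S m ^ n := by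
  simp only [wordBall_eq_pow, pow_mul]

theorem mul_mem_wordBall {m n : ℕ} {g h : G} (hg : g ∈ wordBall S m) (hh : h ∈ wordBall S n) :
    g * h ∈ wordBall S (m + n) := by
  rw [wordBall_eq_pow] at *
  exact pow_add (insert 1 (S ∪ S⁻¹)) m n ▸ Set.mul_mem_mul hg hh

theorem wordBall_mono (S : Set G) : Monotone (wordBall S) :=
  fun _ _ hmn _ ⟨l, hl, hlS, hprod⟩ => ⟨l, hl.trans hmn, hlS, hprod⟩

theorem mem_wordBall_one {g : G} (hg : g ∈ S) : g ∈ wordBall S 1 :=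
  ⟨[g], le_rfl, by simp [hg], by simp⟩

theorem finite_wordBall (hS : S.Finite) (n : ℕ) : (wordBall S n).Finite := by
  classical
  have hT : (insert 1 (S ∪ S⁻¹)).Finite := (hS.union hS.inv).insert 1
  rw [wordBall_eq_pow, ← hT.coe_toFinset, ← Finset.coe_pow]
  exact Finset.finite_toSet _

theorem ncard_pow_le {M : Type*} [Monoid M] {s : Set M} (hs : s.Finite) (n : ℕ) :
    (s ^ n).ncard ≤ s.ncard ^ n := by
  classical
  lift s to Finset M using hs
  rw [← Finset.coe_pow, Set.ncard_coe_finset, Set.ncard_coe_finset]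
  exact Finset.card_pow_le

end WordBall

section FreeMonoid

variable {α : Type*}

theorem freeMonoid_lift_injective_of_forall_ne {M : Type*} [Monoid M] [IsLeftCancelMul M]
    [Nontrivial α] {f : α → M}
    (hf : ∀ a b, a ≠ b → ∀ u v, f a * FreeMonoid.lift f u ≠ f b * FreeMonoid.lift f v) :
    Function.Injective (FreeMonoid.lift f) := by
  have lift_of_mul_ne (a : α) (u : FreeMonoid α) :
      FreeMonoid.lift f (FreeMonoid.of a * u) ≠ FreeMonoid.lift f 1 := by
    obtain ⟨b, hb⟩ := exists_ne a
    intro h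
    apply hf a b hb.symm (u * FreeMonoid.of b) 1
    calc
      f a * FreeMonoid.lift f (u * FreeMonoid.of b)
        = FreeMonoid.lift f (FreeMonoid.of a * u) * f b := by
          simp only [map_mul, FreeMonoid.lift_eval_of, mul_assoc]
      _ = f b * FreeMonoid.lift f 1 := by rw [h, map_one, one_mul, mul_one]
  intro u
  induction u using FreeMonoid.inductionOn' with
  | one =>
    intro v h
    cases v using FreeMonoid.casesOn with
    | one => rfl
    | of_mul b v => exact absurd h.symm (lift_of_mul_ne b v)
  | of_mul a u ih =>
    intro v h
    cases v using FreeMonoid.casesOn with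
    | one => exact absurd h (lift_of_mul_ne a u)
    | of_mul b v =>
      rw [map_mul, map_mul, FreeMonoid.lift_eval_of, FreeMonoid.lift_eval_of] at h
      obtain rfl : a = b := of_not_not fun hab => hf a b hab u v h
      rw [ih (mul_left_cancel h)]

variable {G : Type*} [Group G] [Fintype α] {S : Set G} {f : α → G} {r : ℕ}

theorem card_pow_le_ncard_wordBall_mul (hS : S.Finite)
    (hf : Function.Injective (FreeMonoid.lift f)) (hfS : ∀ a, f a ∈ wordBall S r) (n : ℕ) :
    Fintype.card α ^ n ≤ (wordBall S (r * n)).ncard := by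
  let evalWord (w : Fin n → α) : G := FreeMonoid.lift f (FreeMonoid.ofList (List.ofFn w))
  have evalWord_injective : Function.Injective evalWord :=
    hf.comp (FreeMonoid.ofList.injective.comp List.ofFn_injective)
  have range_subset : Set.range evalWord ⊆ wordBall S (r * n) := by
    rintro _ ⟨w, rfl⟩
    rw [wordBall_mul]
    exact Set.mem_pow.2 ⟨fun i => ⟨f (w i), hfS (w i)⟩, by
      simp only [evalWord, FreeMonoid.lift_ofList, List.map_ofFn, Function.comp_def]⟩
  calc
    Fintype.card α ^ n = (Set.range evalWord).ncard := by
      rw [← Set.image_univ, Set.ncard_image_of_injective _ evalWord_injective, Set.ncard_univ]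
      simp
    _ ≤ (wordBall S (r * n)).ncard := Set.ncard_le_ncard range_subset (finite_wordBall hS _)

theorem card_rpow_inv_pow_le_ncard_wordBall (hS : S.Finite)
    (hf : Function.Injective (FreeMonoid.lift f)) (hr : r ≠ 0)
    (hfS : ∀ a, f a ∈ wordBall S r) (n : ℕ) :
    ((Fintype.card α : ℝ) ^ (r : ℝ)⁻¹) ^ n ≤ (wordBall S n).ncard := by
  refine le_of_pow_le_pow_left₀ hr (Nat.cast_nonneg _) ?_
  calc
    (((Fintype.card α : ℝ) ^ (r : ℝ)⁻¹) ^ n) ^ r = (Fintype.card α : ℝ) ^ n := by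
      rw [pow_right_comm, Real.rpow_inv_natCast_pow (Nat.cast_nonneg _) hr]
    _ ≤ (wordBall S (n * r)).ncard := by
      rw [mul_comm n r]
      exact_mod_cast card_pow_le_ncard_wordBall_mul hS hf hfS n
    _ ≤ ((wordBall S n).ncard : ℝ) ^ r := by
      rw [wordBall_mul]
      exact_mod_cast ncard_pow_le (finite_wordBall hS n) r

end FreeMonoid

section Lamplighter

variable {M X : Type*} [Monoid M] [MulAction M X] {a g : M} {q : ℕ → X}

/-- The two orders of a lamplighter: move with `a`, or move with `a` and then touch the lamp with
`g`. -/
def lamplighterOrder (a g : M) (touch : Bool) : M :=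
  if touch then g * a else a

/-- Here `q n` is the configuration with the lamp untouched and the cursor `n` steps before it. -/
theorem lift_lamplighterOrder_smul (ha : ∀ n, a • q (n + 1) = q n)
    (hg : ∀ n, g • q (n + 1) = q (n + 1)) (w : FreeMonoid Bool) (n : ℕ) :
    FreeMonoid.lift (lamplighterOrder a g) w • q (n + 1 + w.length) = q (n + 1) := by
  induction w using FreeMonoid.inductionOn' generalizing n with
  | one => simp
  | of_mul touch w ih =>
    have hw := ih (n + 1)
    rw [map_mul, FreeMonoid.lift_eval_of, FreeMonoid.length_mul, FreeMonoid.length_of, mul_smul,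
      ← add_assoc, hw]
    cases touch <;> simp [lamplighterOrder, mul_smul, ha, hg]

theorem move_mul_lift_ne_touch_mul_lift (ha : ∀ n, a • q (n + 1) = q n)
    (hg : ∀ n, g • q (n + 1) = q (n + 1)) (hlamp : ∀ n, g • q 0 ≠ q n) (u v : FreeMonoid Bool) :
    a * FreeMonoid.lift (lamplighterOrder a g) u ≠
      g * a * FreeMonoid.lift (lamplighterOrder a g) v := by
  intro h
  obtain hle | hlt := le_or_gt u.length v.length
  · obtain ⟨d, hd⟩ := Nat.exists_eq_add_of_le hle
    have hu := lift_lamplighterOrder_smul ha hg u d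
    have hv := lift_lamplighterOrder_smul ha hg v 0
    apply hlamp d
    calc
      g • q 0 = (g * a * FreeMonoid.lift (lamplighterOrder a g) v) • q (0 + 1 + v.length) := by
        rw [mul_smul, hv, mul_smul, ha]
      _ = (a * FreeMonoid.lift (lamplighterOrder a g) u) • q (d + 1 + u.length) := by
        rw [h, hd]; congr 2; lia
      _ = q d := by rw [mul_smul, hu, ha]
  · obtain ⟨d, hd⟩ := Nat.exists_eq_add_of_lt hlt
    have hu := lift_lamplighterOrder_smul ha hg u 0
    have hv := lift_lamplighterOrder_smul ha hg v (d + 1)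
    have hq : q 0 = q (d + 1) := calc
      q 0 = (a * FreeMonoid.lift (lamplighterOrder a g) u) • q (0 + 1 + u.length) := by
        rw [mul_smul, hu, ha]
      _ = (g * a * FreeMonoid.lift (lamplighterOrder a g) v) • q (d + 1 + 1 + v.length) := by
        rw [h, hd]; congr 2; lia
      _ = q (d + 1) := by rw [mul_smul, hv, mul_smul, ha, hg]
    apply hlamp (d + 1)
    rw [hq, hg]

theorem lift_lamplighterOrder_injective [IsLeftCancelMul M] (ha : ∀ n, a • q (n + 1) = q n)
    (hg : ∀ n, g • q (n + 1) = q (n + 1)) (hlamp : ∀ n, g • q 0 ≠ q n) :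
    Function.Injective (FreeMonoid.lift (lamplighterOrder a g)) := by
  have move_ne_touch := move_mul_lift_ne_touch_mul_lift ha hg hlamp
  apply freeMonoid_lift_injective_of_forall_ne
  rintro (_ | _) (_ | _) hne u v
  · exact absurd rfl hne
  · exact move_ne_touch u v
  · exact (move_ne_touch v u).symm
  · exact absurd rfl hne

end Lamplighter

section KneadingAutomaton

variable {k p : ℕ} {x y : ℕ → ℤ}

theorem KTrans_fst (s : KState) (z : ℤ) :
    (KTrans k p x y s z).1 = if s = .a 0 then z + 1 else z := by
  rcases s with (_ | i) | (_ | i) | _ <;> simp only [KTrans] <;> split_ifs <;> simp_all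

theorem KTrans_fst_bijective (s : KState) :
    Function.Bijective fun z => (KTrans k p x y s z).1 := by
  simp only [KTrans_fst]
  split_ifs
  · exact (Equiv.addRight (1 : ℤ)).bijective
  · exact Function.bijective_id

theorem stateAct_injective (s : KState) : Function.Injective (stateAct k p x y s) := by
  intro u
  induction u generalizing s with
  | nil => rintro (_ | _) h <;> simp_all [stateAct]
  | cons z u ih =>
    rintro (_ | ⟨z', v⟩) h
    · simp [stateAct] at h
    · obtain ⟨hz, hu⟩ := List.cons.inj h
      obtain rfl := (KTrans_fst_bijective s).injective hz
      rw [ih _ hu]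

theorem stateAct_surjective (s : KState) : Function.Surjective (stateAct k p x y s) := by
  intro v
  induction v generalizing s with
  | nil => exact ⟨[], rfl⟩
  | cons z v ih =>
    obtain ⟨z', rfl⟩ := (KTrans_fst_bijective (k := k) (p := p) (x := x) (y := y) s).surjective z
    obtain ⟨u, rfl⟩ := ih (KTrans k p x y s z').2
    exact ⟨z' :: u, rfl⟩

theorem exists_mem_SGens {s : KState} (hs : IsGen k p s) :
    ∃ g ∈ SGens k p x y, ⇑g = stateAct k p x y s :=
  ⟨.ofBijective _ ⟨stateAct_injective s, stateAct_surjective s⟩, ⟨s, hs, rfl⟩, rfl⟩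

theorem finite_setOf_isGen (k p : ℕ) : {s | IsGen k p s}.Finite := by
  refine (((Set.finite_Iio k).image KState.a).union ((Set.finite_Iio p).image KState.b)).subset ?_
  rintro s (⟨i, hi, rfl⟩ | ⟨j, hj, rfl⟩)
  · exact Or.inl ⟨i, hi, rfl⟩
  · exact Or.inr ⟨j, hj, rfl⟩

theorem finite_SGens (k p : ℕ) (x y : ℕ → ℤ) : (SGens k p x y).Finite := by
  refine Set.Finite.subset (((finite_setOf_isGen k p).image (stateAct k p x y)).preimage
    DFunLike.coe_injective.injOn) ?_
  rintro g ⟨s, hs, hg⟩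
  exact ⟨s, hs, hg.symm⟩

theorem stateAct_a_zero_pair (z w : ℤ) : stateAct k p x y (.a 0) [z, w] = [z + 1, w] := rfl

theorem exists_isGen_stateAct_pair (hk : 1 ≤ k) (hp : 1 ≤ p) (x y : ℕ → ℤ) :
    ∃ s, IsGen k p s ∧
      ∀ z w, stateAct k p x y s [z, w] = [z, if z = x 0 then w + 1 else w] := by
  obtain rfl | hk := hk.eq_or_lt
  · refine ⟨.b 0, Or.inr ⟨0, hp, rfl⟩, fun z w => ?_⟩
    by_cases hx : z = x 0
    · simp [stateAct, KTrans, hx]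
    · have hsnd : (KTrans 1 p x y (.b 0) z).2 ≠ .a 0 := by
        by_cases hy : z = y (p - 1) <;> simp_all [KTrans]
      simp [stateAct, KTrans_fst, hsnd, hx]
  · refine ⟨.a 1, Or.inl ⟨1, hk, rfl⟩, fun z w => ?_⟩
    by_cases hx : z = x 0 <;> simp [stateAct, KTrans, hx]

theorem exists_lift_lamplighterOrder_injective (hk : 1 ≤ k) (hp : 1 ≤ p) (x y : ℕ → ℤ) :
    ∃ a ∈ SGens k p x y, ∃ g ∈ SGens k p x y,
      Function.Injective (FreeMonoid.lift (lamplighterOrder a g)) := by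
  obtain ⟨a, haS, ha⟩ := exists_mem_SGens (x := x) (y := y) (s := .a 0) (Or.inl ⟨0, hk, rfl⟩)
  obtain ⟨s, hs, hact⟩ := exists_isGen_stateAct_pair hk hp x y
  obtain ⟨g, hgS, hg⟩ := exists_mem_SGens (x := x) (y := y) hs
  refine ⟨a, haS, g, hgS, lift_lamplighterOrder_injective (q := fun n : ℕ => [x 0 - n, 0])
    (fun n => ?_) (fun n => ?_) fun n => ?_⟩
  · have hshift : x 0 - (n + 1 : ℕ) + 1 = x 0 - n := by lia
    rw [Equiv.Perm.smul_def, ha, stateAct_a_zero_pair, hshift]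
  · have hne : x 0 - (n + 1 : ℕ) ≠ x 0 := by lia
    rw [Equiv.Perm.smul_def, hg, hact, if_neg hne]
  · simp [Equiv.Perm.smul_def, hg, hact]

end KneadingAutomaton

theorem stmt6 (k p : ℕ) (hk : 1 ≤ k) (hp : 1 ≤ p) (x y : ℕ → ℤ)
    (hxy : x (k - 1) ≠ y (p - 1)) :
    ∃ C : ℝ, 1 < C ∧ ∀ n : ℕ, 1 ≤ n →
      (wordBall (SGens k p x y) n).Finite ∧
      C ^ n ≤ ((wordBall (SGens k p x y) n).ncard : ℝ) := by
  obtain ⟨a, ha, g, hg, hfree⟩ := exists_lift_lamplighterOrder_injective hk hp x y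
  have hS := finite_SGens k p x y
  have order_mem (touch : Bool) : lamplighterOrder a g touch ∈ wordBall (SGens k p x y) 2 := by
    cases touch
    · exact wordBall_mono _ one_le_two (mem_wordBall_one ha)
    · exact mul_mem_wordBall (mem_wordBall_one hg) (mem_wordBall_one ha)
  refine ⟨(Fintype.card Bool : ℝ) ^ ((2 : ℕ) : ℝ)⁻¹,
    Real.one_lt_rpow (by simp) (by simp), fun n _ => ⟨finite_wordBall hS n, ?_⟩⟩
  exact card_rpow_inv_pow_le_ncard_wordBall hS hfree two_ne_zero order_mem n
end

section
/- Let K' = [K,K] be the derived subgroup of the kneading group K. Then every element of K' fixes every length-one word (the first level of the tree ℤ*), and for every finitely supported family (g_z)_{z∈ℤ} of elements of K' (i.e. g_z = Id for all but finitely many z), the tree automorphism h defined by h(zv) = z·g_z(v) for all z ∈ ℤ and v ∈ ℤ* belongs to K'. -/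
/-!
Conjugating by powers of `a₁`, which shifts the first letter, moves a section of any other generator
to any prescribed letter `m`. Since every generator is a section of a generator other than `a₁`,
this yields elements of `K` fixing the first level, one for each generator `s`, whose section at `m`
is `s`. Their remaining sections can be nontrivial only for the two coming from `b₁`, and for these
they sit at `m + (y_p - x_k)` and `m + (x_k - y_p)`, which differ because `x_k ≠ y_p`. So at every
letter other than `m` the sections commute, and a commutator word in these elements has only one
nontrivial section: at `m`, where it is the same word in the generators of `K`. Thus `K'` contains
a copy of `K'` at each letter, hence all finitely supported families.
-/

namespace Kneading

open Equiv

section Group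

open Subgroup

theorem mulSingle_mem_commutator_closure {ι : Type*} [DecidableEq ι] {G : ι → Type*}
    [∀ i, Group (G i)] {F : Set (∀ i, G i)} {i : ι}
    (hcomm : ∀ j ≠ i, ∀ f ∈ F, ∀ f' ∈ F, Commute (f j) (f' j)) {g : G i}
    (hg : g ∈ ⁅closure (Function.eval i '' F), closure (Function.eval i '' F)⁆) :
    Pi.mulSingle i g ∈ ⁅closure F, closure F⁆ := by
  have map_eval (j : ι) : map (Pi.evalMonoidHom G j) ⁅closure F, closure F⁆ =
      ⁅closure (Function.eval j '' F), closure (Function.eval j '' F)⁆ := by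
    rw [map_commutator, MonoidHom.map_closure]
    rfl
  rw [← map_eval] at hg
  obtain ⟨f, hf, rfl⟩ := hg
  suffices f = Pi.mulSingle i (f i) from this ▸ hf
  funext j
  obtain rfl | hj := eq_or_ne j i
  · rw [Pi.mulSingle_eq_same]
  · have hcomm_j : IsMulCommutative (closure (Function.eval j '' F)) := by
      refine isMulCommutative_closure ?_
      rintro _ ⟨f, hf, rfl⟩ _ ⟨f', hf', rfl⟩
      exact hcomm j hj f hf f' hf'
    have hfj : f j ∈ map (Pi.evalMonoidHom G j) ⁅closure F, closure F⁆ := ⟨f, hf, rfl⟩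
    rw [map_eval, commutator_self_eq_bot_iff.2 hcomm_j, mem_bot] at hfj
    rw [Pi.mulSingle_eq_of_ne hj, hfj]

end Group

section Tree

variable {α : Type*}

/-- The automorphism of the tree `α*` that fixes the first level and acts by `f z` on the subtree
of words starting with `z`. -/
def ofSections : (α → Perm (List α)) →* Perm (List α) where
  toFun f :=
    { toFun
        | [] => []
        | z :: v => z :: f z v
      invFun
        | [] => []
        | z :: v => z :: (f z)⁻¹ v
      left_inv := by rintro (_ | ⟨z, v⟩) <;> simp
      right_inv := by rintro (_ | ⟨z, v⟩) <;> simp }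
  map_one' := by ext1 (_ | ⟨z, v⟩) <;> rfl
  map_mul' f g := by ext1 (_ | ⟨z, v⟩) <;> rfl

@[simp] theorem ofSections_nil (f : α → Perm (List α)) : ofSections f [] = [] := rfl

@[simp] theorem ofSections_cons (f : α → Perm (List α)) (z : α) (v : List α) :
    ofSections f (z :: v) = z :: f z v := rfl

theorem eq_ofSections {h : Perm (List α)} {f : α → Perm (List α)}
    (hf : ∀ z v, h (z :: v) = z :: f z v) : h = ofSections f := by
  have h_nil : h [] = [] := by
    obtain ⟨_ | ⟨z, v⟩, hu⟩ := h.surjective []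
    · exact hu
    · simp [hf] at hu
  ext1 (_ | ⟨z, v⟩)
  · exact h_nil
  · exact hf z v

/-- The rooted automorphism of the tree `α*` that applies `σ` to the first letter of a word. -/
def rooted : Perm α →* Perm (List α) where
  toFun σ :=
    { toFun := List.modifyHead σ
      invFun := List.modifyHead (σ⁻¹ : Perm α)
      left_inv := by rintro (_ | ⟨z, v⟩) <;> simp
      right_inv := by rintro (_ | ⟨z, v⟩) <;> simp }
  map_one' := by ext1 (_ | ⟨z, v⟩) <;> rfl
  map_mul' σ τ := by ext1 (_ | ⟨z, v⟩) <;> rfl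

@[simp] theorem rooted_nil (σ : Perm α) : rooted σ [] = [] := rfl

@[simp] theorem rooted_cons (σ : Perm α) (z : α) (v : List α) :
    rooted σ (z :: v) = σ z :: v := rfl

theorem inv_rooted_mul_ofSections_mul_rooted (σ : Perm α) (f : α → Perm (List α)) :
    (rooted σ)⁻¹ * ofSections f * rooted σ = ofSections (f ∘ σ) := by
  rw [mul_assoc, inv_mul_eq_iff_eq_mul]
  ext1 (_ | ⟨z, v⟩) <;> simp

theorem inv_apply_singleton {A : Type*} [AddGroup A] {g : Perm (List A)} {n : A}
    (hg : ∀ z, g [z] = [z + n]) (z : A) : g⁻¹ [z] = [z - n] := by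
  rw [Perm.inv_eq_iff_eq, hg, sub_add_cancel]

/-- The permutations of `A*` that act on the first level, identified with `A`, by a translation. -/
def firstLevelTranslations (A : Type*) [AddGroup A] : Subgroup (Perm (List A)) where
  carrier := {g | ∃ n, ∀ z, g [z] = [z + n]}
  one_mem' := ⟨0, by simp⟩
  mul_mem' := by
    rintro g h ⟨m, hm⟩ ⟨n, hn⟩
    exact ⟨n + m, fun z => by simp [hm, hn, add_assoc]⟩
  inv_mem' := by
    rintro g ⟨m, hm⟩
    exact ⟨-m, fun z => by rw [inv_apply_singleton hm, sub_eq_add_neg]⟩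

theorem apply_singleton_of_mem_commutator_firstLevelTranslations {A : Type*} [AddCommGroup A]
    {h : Perm (List A)} (hh : h ∈ ⁅firstLevelTranslations A, firstLevelTranslations A⁆) (z : A) :
    h [z] = [z] := by
  suffices ⁅firstLevelTranslations A, firstLevelTranslations A⁆ ≤
      MulAction.stabilizer (Perm (List A)) [z] from this hh
  refine Subgroup.commutator_le.2 ?_
  rintro g₁ ⟨m, hm⟩ g₂ ⟨n, hn⟩
  simp only [MulAction.mem_stabilizer_iff, commutatorElement_def, Perm.smul_def, Perm.mul_apply,
    hm, hn, inv_apply_singleton hm, inv_apply_singleton hn]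
  congr 1
  abel

end Tree

section Automaton

variable (k p : ℕ) (x y : ℕ → ℤ)

theorem KTrans_fst_of_ne {s : KState} (hs : s ≠ .a 0) (z : ℤ) : (KTrans k p x y s z).1 = z := by
  rcases s with (_ | i) | (_ | i) | _ <;> grind [KTrans]

theorem bijective_KTrans_fst (s : KState) :
    Function.Bijective fun z => (KTrans k p x y s z).1 := by
  by_cases hs : s = .a 0
  · exact hs ▸ (Equiv.addRight (1 : ℤ)).bijective
  · simp only [KTrans_fst_of_ne k p x y hs]
    exact Function.bijective_id

theorem bijective_stateAct (s : KState) : Function.Bijective (stateAct k p x y s) := by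
  constructor
  · intro v w h
    induction v generalizing s w with
    | nil => cases w <;> simp_all [stateAct]
    | cons z v ih =>
      rcases w with _ | ⟨z', w⟩
      · simp [stateAct] at h
      · rw [stateAct, stateAct, List.cons.injEq] at h
        obtain rfl : z = z' := (bijective_KTrans_fst k p x y s).injective h.1
        rw [ih _ h.2]
  · intro w
    induction w generalizing s with
    | nil => exact ⟨[], rfl⟩
    | cons z w ih =>
      obtain ⟨z', rfl⟩ := (bijective_KTrans_fst k p x y s).surjective z
      obtain ⟨v, rfl⟩ := ih (KTrans k p x y s z').2
      exact ⟨z' :: v, rfl⟩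

/-- The automorphism of `ℤ*` induced by a state of the kneading automaton. -/
noncomputable def statePerm (s : KState) : Perm (List ℤ) :=
  .ofBijective (stateAct k p x y s) (bijective_stateAct k p x y s)

theorem statePerm_cons (s : KState) (z : ℤ) (v : List ℤ) :
    statePerm k p x y s (z :: v) =
      (KTrans k p x y s z).1 :: statePerm k p x y (KTrans k p x y s z).2 v := rfl

theorem statePerm_eq_ofSections {s : KState} (hs : s ≠ .a 0) :
    statePerm k p x y s = ofSections fun z => statePerm k p x y (KTrans k p x y s z).2 :=
  eq_ofSections fun z v => by rw [statePerm_cons, KTrans_fst_of_ne k p x y hs]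

theorem statePerm_id : statePerm k p x y .id = 1 := by
  ext1 v
  induction v with
  | nil => rfl
  | cons z v ih => exact congrArg (z :: ·) ih

theorem statePerm_a_zero : statePerm k p x y (.a 0) = rooted (Equiv.addRight 1) := by
  ext1 (_ | ⟨z, v⟩)
  · rfl
  · exact congrArg ((z + 1) :: ·) (DFunLike.congr_fun (statePerm_id k p x y) v)

variable {k p x y}

theorem statePerm_mem_Kgroup {s : KState} (hs : IsGen k p s) :
    statePerm k p x y s ∈ Kgroup k p x y :=
  Subgroup.subset_closure ⟨s, hs, rfl⟩

theorem Kgroup_le {H : Subgroup (Perm (List ℤ))}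
    (hH : ∀ s, IsGen k p s → statePerm k p x y s ∈ H) : Kgroup k p x y ≤ H := by
  refine (Subgroup.closure_le H).2 ?_
  rintro g ⟨s, hs, hg⟩
  exact (DFunLike.coe_injective hg : g = statePerm k p x y s) ▸ hH s hs

theorem Kgroup_le_firstLevelTranslations : Kgroup k p x y ≤ firstLevelTranslations ℤ := by
  refine Kgroup_le fun s _ => ?_
  by_cases hs : s = .a 0
  · exact ⟨1, fun z => by rw [hs, statePerm_a_zero]; rfl⟩
  · exact ⟨0, fun z => by rw [statePerm_eq_ofSections k p x y hs, add_zero]; rfl⟩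

theorem exists_KTrans_snd_eq (hp : 1 ≤ p) (hxy : x (k - 1) ≠ y (p - 1)) {s : KState}
    (hs : IsGen k p s) :
    ∃ t z, IsGen k p t ∧ t ≠ .a 0 ∧ (KTrans k p x y t z).2 = s := by
  have hb : IsGen k p (.b 0) := .inr ⟨0, hp, rfl⟩
  rcases hs with ⟨i, hi, rfl⟩ | ⟨i, hi, rfl⟩
  · by_cases hik : i + 1 < k
    · exact ⟨.a (i + 1), x i, .inl ⟨_, hik, rfl⟩, by simp, by simp [KTrans]⟩
    · obtain rfl : i = k - 1 := by lia
      exact ⟨.b 0, x (k - 1), hb, by simp, by simp [KTrans]⟩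
  · by_cases hip : i + 1 < p
    · exact ⟨.b (i + 1), y i, .inr ⟨_, hip, rfl⟩, by simp, by simp [KTrans]⟩
    · obtain rfl : i = p - 1 := by lia
      exact ⟨.b 0, y (p - 1), hb, by simp, by simp [KTrans, hxy.symm]⟩

theorem eq_b_zero_of_KTrans_snd_ne_id {s : KState} {z w : ℤ} (hzw : z ≠ w)
    (hz : (KTrans k p x y s z).2 ≠ .id) (hw : (KTrans k p x y s w).2 ≠ .id) :
    s = .b 0 ∧ (z = x (k - 1) ∧ w = y (p - 1) ∨ z = y (p - 1) ∧ w = x (k - 1)) := by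
  rcases s with (_ | i) | (_ | i) | _ <;> grind [KTrans]

/-- The section families of the conjugates by powers of `a₁` of the generators other than `a₁`,
restricted to the conjugates whose section at `m` comes from a nontrivial transition. -/
def sectionsAt (k p : ℕ) (x y : ℕ → ℤ) (m : ℤ) : Set (ℤ → Perm (List ℤ)) :=
  {f | ∃ s n, IsGen k p s ∧ s ≠ .a 0 ∧ (KTrans k p x y s (m + n)).2 ≠ .id ∧
    f = fun z => statePerm k p x y (KTrans k p x y s (z + n)).2}

theorem ofSections_mem_Kgroup_of_mem_sectionsAt (hk : 1 ≤ k) {m : ℤ} {f : ℤ → Perm (List ℤ)}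
    (hf : f ∈ sectionsAt k p x y m) : ofSections f ∈ Kgroup k p x y := by
  obtain ⟨s, n, hs, hs0, -, rfl⟩ := hf
  have shift_mem : rooted (Equiv.addRight n) ∈ Kgroup k p x y := by
    have h1 : rooted (Equiv.addRight 1) ∈ Kgroup k p x y :=
      statePerm_a_zero k p x y ▸ statePerm_mem_Kgroup (.inl ⟨0, hk, rfl⟩)
    simpa [← map_zpow] using zpow_mem h1 n
  have conj_mem := mul_mem (mul_mem (inv_mem shift_mem) (statePerm_mem_Kgroup hs)) shift_mem
  rwa [statePerm_eq_ofSections k p x y hs0, inv_rooted_mul_ofSections_mul_rooted] at conj_mem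

theorem commute_of_mem_sectionsAt {m z : ℤ} (hz : z ≠ m) {f f' : ℤ → Perm (List ℤ)}
    (hf : f ∈ sectionsAt k p x y m) (hf' : f' ∈ sectionsAt k p x y m) :
    Commute (f z) (f' z) := by
  obtain ⟨s, n, -, -, hm, rfl⟩ := hf
  obtain ⟨s', n', -, -, hm', rfl⟩ := hf'
  by_cases h : (KTrans k p x y s (z + n)).2 = .id
  · simp [h, statePerm_id]
  by_cases h' : (KTrans k p x y s' (z + n')).2 = .id
  · simp [h', statePerm_id]
  obtain ⟨rfl, hn⟩ := eq_b_zero_of_KTrans_snd_ne_id (by lia) h hm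
  obtain ⟨rfl, hn'⟩ := eq_b_zero_of_KTrans_snd_ne_id (by lia) h' hm'
  obtain rfl : n = n' := by lia
  exact .refl _

theorem Kgroup_le_closure_sectionsAt (hp : 1 ≤ p) (hxy : x (k - 1) ≠ y (p - 1)) (m : ℤ) :
    Kgroup k p x y ≤ Subgroup.closure (Function.eval m '' sectionsAt k p x y m) := by
  refine Kgroup_le fun s hs => Subgroup.subset_closure ?_
  obtain ⟨t, z, ht, ht0, rfl⟩ := exists_KTrans_snd_eq hp hxy hs
  refine ⟨_, ⟨t, z - m, ht, ht0, ?_, rfl⟩, by simp⟩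
  rcases hs with ⟨i, -, hi⟩ | ⟨i, -, hi⟩ <;> simp [hi]

theorem ofSections_mulSingle_mem_commutator (hk : 1 ≤ k) (hp : 1 ≤ p)
    (hxy : x (k - 1) ≠ y (p - 1)) {g : Perm (List ℤ)}
    (hg : g ∈ ⁅Kgroup k p x y, Kgroup k p x y⁆) (m : ℤ) :
    ofSections (Pi.mulSingle m g) ∈ ⁅Kgroup k p x y, Kgroup k p x y⁆ := by
  set L := Subgroup.closure (sectionsAt k p x y m)
  have hL : L.map ofSections ≤ Kgroup k p x y :=
    Subgroup.map_le_iff_le_comap.2 <| (Subgroup.closure_le _).2 fun _ =>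
      ofSections_mem_Kgroup_of_mem_sectionsAt hk
  have hgL : Pi.mulSingle m g ∈ ⁅L, L⁆ := by
    have hK := Kgroup_le_closure_sectionsAt hp hxy m
    exact mulSingle_mem_commutator_closure
      (fun z hz f hf f' hf' => commute_of_mem_sectionsAt hz hf hf')
      (Subgroup.commutator_mono hK hK hg)
  have hmap : ofSections (Pi.mulSingle m g) ∈ ⁅L.map ofSections, L.map ofSections⁆ :=
    Subgroup.map_commutator L L ofSections ▸ Subgroup.mem_map_of_mem ofSections hgL
  exact Subgroup.commutator_mono hL hL hmap

theorem ofSections_mem_commutator (hk : 1 ≤ k) (hp : 1 ≤ p) (hxy : x (k - 1) ≠ y (p - 1))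
    {g : ℤ → Perm (List ℤ)} (hg : ∀ z, g z ∈ ⁅Kgroup k p x y, Kgroup k p x y⁆)
    (hfin : {z | g z ≠ 1}.Finite) :
    ofSections g ∈ ⁅Kgroup k p x y, Kgroup k p x y⁆ :=
  Submonoid.pi_mem_of_mulSingle_mem_aux hfin.toFinset
    (H := ⁅Kgroup k p x y, Kgroup k p x y⁆.comap ofSections) g (fun z hz => by simpa using hz)
    fun z _ => ofSections_mulSingle_mem_commutator hk hp hxy (hg z) z

end Automaton

end Kneading

theorem stmt9 (k p : ℕ) (hk : 1 ≤ k) (hp : 1 ≤ p) (x y : ℕ → ℤ)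
    (hxy : x (k - 1) ≠ y (p - 1)) :
    (∀ h ∈ ⁅Kgroup k p x y, Kgroup k p x y⁆, ∀ z : ℤ, h [z] = [z]) ∧
    (∀ g : ℤ → Equiv.Perm (List ℤ),
      (∀ z : ℤ, g z ∈ ⁅Kgroup k p x y, Kgroup k p x y⁆) →
      {z : ℤ | g z ≠ 1}.Finite →
      ∀ h : Equiv.Perm (List ℤ),
        (∀ (z : ℤ) (v : List ℤ), h (z :: v) = z :: g z v) →
        h ∈ ⁅Kgroup k p x y, Kgroup k p x y⁆) := by
  refine ⟨fun h hh z => ?_, fun g hg hfin h hh => ?_⟩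
  · have hK : Kgroup k p x y ≤ Kneading.firstLevelTranslations ℤ :=
      Kneading.Kgroup_le_firstLevelTranslations
    exact Kneading.apply_singleton_of_mem_commutator_firstLevelTranslations
      (Subgroup.commutator_mono hK hK hh) z
  · rw [Kneading.eq_ofSections hh]
    exact Kneading.ofSections_mem_commutator hk hp hxy hg hfin
end
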